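/- For every η ∈ (0,1) and q ∈ [2,∞) there exists a constant K = K(η,q) ∈ (0,∞) with the following property. If (X,‖·‖_X) is a Banach space satisfying δ_X(ε) ≥ (ηε)^q for every ε ∈ (0,1), then for every n ∈ ℕ and every function f : ℍ → X one has ∑_{k=1}^{n²} ∑_{x ∈ B_n} ‖f(xc^k) − f(x)‖_X^q / k^{1+q/2} ≤ K ∑_{x ∈ B_{21n}} (‖f(xa) − f(x)‖_X^q + ‖f(xb) − f(x)‖_X^q). -/

import Mathlib

/-- The discrete Heisenberg group, as ℤ³ with the Heisenberg multiplication
(equivalently, unit upper-triangular 3×3 integer matrices). -/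
@[ext]
structure DH where
  x : ℤ
  y : ℤ
  z : ℤ

namespace DH

instance : Mul DH := ⟨fun a b => ⟨a.x + b.x, a.y + b.y, a.z + b.z + a.x * b.y⟩⟩
instance : One DH := ⟨⟨0, 0, 0⟩⟩
instance : Inv DH := ⟨fun a => ⟨-a.x, -a.y, -a.z + a.x * a.y⟩⟩

lemma mul_def (a b : DH) : a * b = ⟨a.x + b.x, a.y + b.y, a.z + b.z + a.x * b.y⟩ := rfl
lemma one_def : (1 : DH) = ⟨0, 0, 0⟩ := rfl
lemma inv_def (a : DH) : a⁻¹ = ⟨-a.x, -a.y, -a.z + a.x * a.y⟩ := rfl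

instance : Group DH where
  mul_assoc a b c := by
    simp only [mul_def, mk.injEq]
    refine ⟨by ring, by ring, by ring⟩
  one_mul a := by simp [mul_def, one_def]
  mul_one a := by simp [mul_def, one_def]
  inv_mul_cancel a := by
    simp only [mul_def, inv_def, one_def, mk.injEq]
    refine ⟨by ring, by ring, by ring⟩

/-- The generator `a`. -/
def gA : DH := ⟨1, 0, 0⟩

/-- The generator `b`. -/
def gB : DH := ⟨0, 1, 0⟩

/-- The commutator `c = aba⁻¹b⁻¹`, a generator of the center. -/
def gC : DH := gA * gB * gA⁻¹ * gB⁻¹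

/-- Word length with respect to the symmetric generating set `{a, b, a⁻¹, b⁻¹}`. -/
noncomputable def wordLen (g : DH) : ℕ :=
  sInf {n | ∃ l : List DH, l.length = n ∧
    (∀ s ∈ l, s ∈ ({gA, gB, gA⁻¹, gB⁻¹} : Set DH)) ∧ l.prod = g}

/-- The left-invariant word metric on the discrete Heisenberg group. -/
noncomputable def dW (g h : DH) : ℕ := wordLen (g⁻¹ * h)

/-- The closed ball of radius `n` centered at the identity. -/
def Ball (n : ℕ) : Set DH := {g | dW g 1 ≤ n}

end DH

namespace DH

lemma gC_eq : gC = ⟨0, 0, 1⟩ := by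
  simp [gC, gA, gB, mul_def, inv_def]

lemma gA_pow (k : ℕ) : gA ^ k = ⟨k, 0, 0⟩ := by
  induction k with
  | zero => rfl
  | succ k ih => rw [pow_succ, ih]; simp [gA, mul_def]

lemma gB_pow (k : ℕ) : gB ^ k = ⟨0, k, 0⟩ := by
  induction k with
  | zero => rfl
  | succ k ih => rw [pow_succ, ih]; simp [gB, mul_def]

lemma gC_pow (k : ℕ) : gC ^ k = ⟨0, 0, k⟩ := by
  induction k with
  | zero => rfl
  | succ k ih => rw [pow_succ, ih]; simp [gC_eq, mul_def]

lemma gC_pow_comm (k : ℕ) (g : DH) : gC ^ k * g = g * gC ^ k := by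
  simp [gC_pow, mul_def, add_comm]

/-- The symmetric generating set. -/
abbrev gens : Set DH := {gA, gB, gA⁻¹, gB⁻¹}

lemma inv_mem_gens {s : DH} (hs : s ∈ gens) : s⁻¹ ∈ gens := by
  rcases hs with rfl | rfl | rfl | rfl <;> simp [gens]

lemma closure_gens : Submonoid.closure gens = ⊤ := by
  set M := Submonoid.closure gens
  have hM : ∀ s ∈ gens, s ∈ M := fun s hs => Submonoid.subset_closure hs
  have hzpow : ∀ g : DH, g ∈ M → g⁻¹ ∈ M → ∀ k : ℤ, g ^ k ∈ M := by
    rintro g hg hg' (k | k)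
    · simpa using pow_mem hg k
    · rw [zpow_negSucc, ← inv_pow]
      exact pow_mem hg' _
  have ha : gA ∈ M := hM _ (by simp)
  have hb : gB ∈ M := hM _ (by simp)
  have ha' : gA⁻¹ ∈ M := hM _ (by simp)
  have hb' : gB⁻¹ ∈ M := hM _ (by simp)
  have hc : gC ∈ M := mul_mem (mul_mem (mul_mem ha hb) ha') hb'
  have hc' : gC⁻¹ ∈ M := by
    have : gC⁻¹ = gB * gA * gB⁻¹ * gA⁻¹ := by simp [gC, mul_assoc]
    rw [this]
    exact mul_mem (mul_mem (mul_mem hb ha) hb') ha'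
  have ea : ∀ k : ℤ, gA ^ k = ⟨k, 0, 0⟩ := by
    rintro (k | k)
    · simp [gA_pow]
    · rw [zpow_negSucc, gA_pow]; simp [inv_def, Int.negSucc_eq, add_comm]
  have eb : ∀ k : ℤ, gB ^ k = ⟨0, k, 0⟩ := by
    rintro (k | k)
    · simp [gB_pow]
    · rw [zpow_negSucc, gB_pow]; simp [inv_def, Int.negSucc_eq, add_comm]
  have ec : ∀ k : ℤ, gC ^ k = ⟨0, 0, k⟩ := by
    rintro (k | k)
    · simp [gC_pow]
    · rw [zpow_negSucc, gC_pow]; simp [inv_def, Int.negSucc_eq, add_comm]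
  refine eq_top_iff.2 fun g _ => ?_
  have hg : g = gB ^ g.y * gA ^ g.x * gC ^ g.z := by
    ext <;> simp [ea, eb, ec, mul_def]
  rw [hg]
  exact mul_mem (mul_mem (hzpow _ hb hb' _) (hzpow _ ha ha' _)) (hzpow _ hc hc' _)

lemma exists_word_inv {l : List DH} (hl : ∀ s ∈ l, s ∈ gens) :
    ∃ l' : List DH, l'.length = l.length ∧ (∀ s ∈ l', s ∈ gens) ∧ l'.prod = l.prod⁻¹ := by
  refine ⟨(l.map fun s => s⁻¹).reverse, by simp, ?_, by rw [List.prod_inv_reverse]⟩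
  intro s hs
  simp only [List.mem_reverse, List.mem_map] at hs
  obtain ⟨t, ht, rfl⟩ := hs
  exact inv_mem_gens (hl t ht)

lemma mem_Ball_iff {n : ℕ} {g : DH} :
    g ∈ Ball n ↔ ∃ l : List DH, l.length ≤ n ∧ (∀ s ∈ l, s ∈ gens) ∧ l.prod = g := by
  have hne : {n | ∃ l : List DH, l.length = n ∧ (∀ s ∈ l, s ∈ gens) ∧ l.prod = g⁻¹}.Nonempty := by
    have : g⁻¹ ∈ Submonoid.closure gens := by simp [closure_gens]
    obtain ⟨l, hl, hg⟩ := Submonoid.exists_list_of_mem_closure this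
    exact ⟨_, l, rfl, hl, hg⟩
  simp only [Ball, dW, wordLen, mul_one, Set.mem_ofPred_eq]
  constructor
  · intro h
    obtain ⟨l, hl, hs, hg⟩ := Nat.sInf_mem hne
    obtain ⟨l', hl', hs', hg'⟩ := exists_word_inv hs
    exact ⟨l', (hl'.trans hl).le.trans h, hs', by rw [hg', hg, inv_inv]⟩
  · rintro ⟨l₀, hl, hs, rfl⟩
    obtain ⟨l', hl', hs', hg'⟩ := exists_word_inv hs
    have hmem : l'.length ∈ {n | ∃ l : List DH, l.length = n ∧ (∀ s ∈ l, s ∈ gens) ∧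
        l.prod = l₀.prod⁻¹} := ⟨l', rfl, hs', hg'⟩
    exact (Nat.sInf_le hmem).trans (hl'.le.trans hl)

lemma Ball_mono {m n : ℕ} (h : m ≤ n) : Ball m ⊆ Ball n := fun _ hg => le_trans hg h

lemma mul_mem_Ball {m n : ℕ} {g h : DH} (hg : g ∈ Ball m) (hh : h ∈ Ball n) :
    g * h ∈ Ball (m + n) := by
  obtain ⟨l, hl, hs, rfl⟩ := mem_Ball_iff.1 hg
  obtain ⟨l', hl', hs', rfl⟩ := mem_Ball_iff.1 hh
  refine mem_Ball_iff.2 ⟨l ++ l', by simp; omega, ?_, by simp⟩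
  intro s h
  rcases List.mem_append.1 h with h | h
  exacts [hs s h, hs' s h]

lemma pow_mem_Ball {s : DH} (hs : s ∈ gens) (k : ℕ) : s ^ k ∈ Ball k :=
  mem_Ball_iff.2 ⟨List.replicate k s, by simp,
    fun t ht => by rwa [List.eq_of_mem_replicate ht], by simp⟩

lemma gC_pow_mem_Ball {k n : ℕ} (h : k ≤ n ^ 2) : gC ^ k ∈ Ball (4 * n) := by
  rcases Nat.eq_zero_or_pos k with rfl | hk
  · exact mem_Ball_iff.2 ⟨[], by simp, by simp, by simp⟩
  have hn : 0 < n := by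
    rcases Nat.eq_zero_or_pos n with rfl | hn
    · omega
    · exact hn
  obtain ⟨l, r, hr, hkl⟩ : ∃ l r, r < n ∧ k = n * l + r + 1 :=
    ⟨(k - 1) / n, (k - 1) % n, Nat.mod_lt _ hn, by have := Nat.div_add_mod (k - 1) n; omega⟩
  have hl : l < n := by nlinarith
  obtain ⟨t, rfl⟩ : ∃ t, n = r + 1 + t := ⟨n - (r + 1), by omega⟩
  have e : gC ^ k = gA ^ (r + 1) * gB ^ 1 * gA ^ t * gB ^ l * gA⁻¹ ^ (r + 1 + t) *
      gB⁻¹ ^ (l + 1) := by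
    rw [inv_pow, inv_pow]
    subst hkl
    ext <;> simp only [gA_pow, gB_pow, gC_pow, mul_def, inv_def] <;> push_cast <;> ring
  rw [e]
  have hA : gA ∈ gens := by simp
  have hB : gB ∈ gens := by simp
  exact Ball_mono (by omega) (mul_mem_Ball (mul_mem_Ball (mul_mem_Ball (mul_mem_Ball (mul_mem_Ball
    (pow_mem_Ball hA _) (pow_mem_Ball hB _)) (pow_mem_Ball hA _)) (pow_mem_Ball hB _))
    (pow_mem_Ball (inv_mem_gens hA) _)) (pow_mem_Ball (inv_mem_gens hB) _))

lemma finite_Ball (n : ℕ) : (Ball n).Finite := by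
  have : Finite gens := by
    rw [Set.finite_coe_iff]; exact Set.toFinite _
  refine ((List.finite_length_le gens n).image fun l => (l.map Subtype.val).prod).subset ?_
  intro g hg
  obtain ⟨l, hl, hs, rfl⟩ := mem_Ball_iff.1 hg
  lift l to List gens using hs
  exact ⟨l, by simpa using hl, rfl⟩

/-- The ball of radius `n` as a finset. -/
noncomputable def ballF (n : ℕ) : Finset DH := (finite_Ball n).toFinset

@[simp] lemma mem_ballF {n : ℕ} {g : DH} : g ∈ ballF n ↔ g ∈ Ball n := by simp [ballF]

lemma tsum_Ball (n : ℕ) (φ : DH → ℝ) : ∑' x : Ball n, φ x = ∑ x ∈ ballF n, φ x := by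
  rw [← Finset.tsum_subtype', ballF, (finite_Ball n).coe_toFinset]

lemma sum_ballF_mono {m n : ℕ} (h : m ≤ n) {φ : DH → ℝ} (hφ : ∀ x, 0 ≤ φ x) :
    ∑ x ∈ ballF m, φ x ≤ ∑ x ∈ ballF n, φ x :=
  Finset.sum_le_sum_of_subset_of_nonneg (fun x hx => by
    rw [mem_ballF] at *; exact Ball_mono h hx) fun x _ _ => hφ x

lemma sum_ballF_mul_right_le {m k : ℕ} {g : DH} (hg : g ∈ Ball k) {φ : DH → ℝ}
    (hφ : ∀ x, 0 ≤ φ x) : ∑ x ∈ ballF m, φ (x * g) ≤ ∑ x ∈ ballF (m + k), φ x := by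
  classical
  rw [← Finset.sum_image (s := ballF m) (g := fun x => x * g) (f := φ)
    fun x _ y _ h => mul_right_cancel h]
  refine Finset.sum_le_sum_of_subset_of_nonneg (fun x hx => ?_) fun x _ _ => hφ x
  obtain ⟨y, hy, rfl⟩ := Finset.mem_image.1 hx
  exact mem_ballF.2 (mul_mem_Ball (mem_ballF.1 hy) hg)

end DH
lemma convex_comb_rpow_le {q : ℝ} (hq : 2 ≤ q) {s t a b : ℝ} (hs : 0 ≤ s) (ht : 0 ≤ t)
    (hst : s + t = 1) (ha : 0 ≤ a) (hb : 0 ≤ b) :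
    (s * a + t * b) ^ q ≤ s * a ^ q + t * b ^ q :=
  (convexOn_rpow (by linarith : 1 ≤ q)).2 ha hb hs ht hst

lemma sq_rpow_half {a : ℝ} (ha : 0 ≤ a) (q : ℝ) : (a ^ 2) ^ (q / 2) = a ^ q := by
  rw [← Real.rpow_natCast, ← Real.rpow_mul ha]; congr 1; push_cast; ring

lemma real_midpoint_rpow {q : ℝ} (hq : 2 ≤ q) {s t : ℝ} (hs : 0 ≤ s) (hst : s ≤ t) :
    ((t + s) / 2) ^ q + ((t - s) / 2) ^ q ≤ (t ^ q + s ^ q) / 2 := by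
  have key : ∀ a b : ℝ, 0 ≤ a → 0 ≤ b → a ^ (q / 2) + b ^ (q / 2) ≤ (a + b) ^ (q / 2) :=
    fun a b ha hb => Real.add_rpow_le_rpow_add ha hb (by linarith)
  have h1 := key (((t + s) / 2) ^ 2) (((t - s) / 2) ^ 2) (sq_nonneg _) (sq_nonneg _)
  rw [sq_rpow_half (by linarith), sq_rpow_half (by linarith)] at h1
  have h2 : (1 / 2 * t ^ 2 + 1 / 2 * s ^ 2) ^ (q / 2) ≤
      1 / 2 * (t ^ 2) ^ (q / 2) + 1 / 2 * (s ^ 2) ^ (q / 2) :=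
    (convexOn_rpow (by linarith : 1 ≤ q / 2)).2 (sq_nonneg t) (sq_nonneg s) (by norm_num)
      (by norm_num) (by norm_num)
  rw [sq_rpow_half (hs.trans hst), sq_rpow_half hs] at h2
  have : ((t + s) / 2) ^ 2 + ((t - s) / 2) ^ 2 = 1 / 2 * t ^ 2 + 1 / 2 * s ^ 2 := by ring
  rw [this] at h1
  linarith

section
variable {X : Type*} [NormedAddCommGroup X] [NormedSpace ℝ X]

lemma midpoint_rpow_le_of_norm_eq_one {η q : ℝ} (hη : η ∈ Set.Ioo (0 : ℝ) 1) (hq : 2 ≤ q)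
    (hX : ∀ ε ∈ Set.Ioo (0 : ℝ) 1, ∀ x y : X, ‖x‖ = 1 → ‖y‖ = 1 → ε ≤ ‖x - y‖ →
      ‖x + y‖ ≤ 2 * (1 - (η * ε) ^ q)) {u v : X} (hu : ‖u‖ = 1) (hv : ‖v‖ ≤ 1) :
    ‖(2⁻¹ : ℝ) • (u + v)‖ ^ q + (η / 32) ^ q * ‖u - v‖ ^ q ≤ (‖u‖ ^ q + ‖v‖ ^ q) / 2 := by
  obtain ⟨hη0, hη1⟩ := hη
  have hq0 : 0 ≤ q := by linarith
  set s := ‖v‖ with hs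
  set d := ‖u - v‖ with hd
  have hs0 : 0 ≤ s := norm_nonneg _
  have hd0 : 0 ≤ d := norm_nonneg _
  have hd2 : d ≤ 1 + s := (norm_sub_le _ _).trans (by rw [hu])
  have hR := real_midpoint_rpow hq hs0 hv
  rw [hu]
  rw [← Real.mul_rpow (by positivity) hd0]
  have hmid : ‖(2⁻¹ : ℝ) • (u + v)‖ ≤ (1 + s) / 2 := by
    rw [norm_smul, Real.norm_of_nonneg (by norm_num)]
    have := norm_add_le u v
    rw [hu] at this
    linarith
  rcases le_or_gt (d / 4) (1 - s) with h | h
  · have h1 : ‖(2⁻¹ : ℝ) • (u + v)‖ ^ q ≤ ((1 + s) / 2) ^ q :=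
      Real.rpow_le_rpow (norm_nonneg _) hmid hq0
    have h2 : (η / 32 * d) ^ q ≤ ((1 - s) / 2) ^ q := by
      refine Real.rpow_le_rpow (by positivity) ?_ hq0
      nlinarith
    linarith
  · have hs1 : 3 / 5 < s := by linarith
    have hdpos : 0 < d := by linarith
    have hv' : ‖s⁻¹ • v‖ = 1 := by
      rw [norm_smul, norm_inv, Real.norm_of_nonneg hs0, ← hs, inv_mul_cancel₀ (by linarith)]
    have hsv : v = s • s⁻¹ • v := by rw [smul_smul, mul_inv_cancel₀ (by linarith), one_smul]
    have hvv : ‖s⁻¹ • v - v‖ = 1 - s := by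
      have : s⁻¹ • v - v = (1 - s) • s⁻¹ • v := by
        conv_lhs => rw [hsv]
        rw [sub_smul, one_smul, ← hsv]
      rw [this, norm_smul, hv', Real.norm_of_nonneg (by linarith), mul_one]
    have hfar : 3 * d / 8 ≤ ‖u - s⁻¹ • v‖ := by
      have := norm_sub_le_norm_sub_add_norm_sub u (s⁻¹ • v) v
      rw [hvv, ← hd] at this
      linarith
    have hε : 3 * d / 8 ∈ Set.Ioo (0 : ℝ) 1 := ⟨by linarith, by linarith⟩
    have hc := hX _ hε u _ hu hv' hfar
    set δ := (η * (3 * d / 8)) ^ q with hδ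
    have hδ0 : 0 ≤ δ := by positivity
    have hδ1 : δ ≤ 1 := Real.rpow_le_one (by positivity) (by nlinarith [hε.2]) hq0
    have huv : ‖u + v‖ ≤ s * (2 * (1 - δ)) + (1 - s) := by
      have : u + v = s • (u + s⁻¹ • v) + (1 - s) • u := by
        rw [smul_add, ← hsv, sub_smul, one_smul]; abel
      rw [this]
      refine (norm_add_le _ _).trans ?_
      rw [norm_smul, norm_smul, hu, Real.norm_of_nonneg hs0, Real.norm_of_nonneg (by linarith)]
      nlinarith
    set m := (1 + s) / 2 with hm
    have hmid' : ‖(2⁻¹ : ℝ) • (u + v)‖ ≤ m * (1 - δ / 2) := by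
      rw [norm_smul, Real.norm_of_nonneg (by norm_num)]
      nlinarith
    have h1 : ‖(2⁻¹ : ℝ) • (u + v)‖ ^ q ≤ m ^ q * (1 - δ / 2) := by
      refine (Real.rpow_le_rpow (norm_nonneg _) hmid' hq0).trans ?_
      rw [Real.mul_rpow (by linarith) (by linarith)]
      refine mul_le_mul_of_nonneg_left ?_ (by positivity)
      have := Real.rpow_le_rpow_of_exponent_ge' (x := 1 - δ / 2) (by linarith) (by linarith)
        zero_le_one (by linarith : (1 : ℝ) ≤ q)
      rwa [Real.rpow_one] at this
    have h2 : (η / 32 * d) ^ q ≤ m ^ q * (δ / 2) := by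
      have h3 : (η / 32 * d) ^ q ≤ (m * (η * (3 * d / 8)) / 2) ^ q := by
        refine Real.rpow_le_rpow (by positivity) ?_ hq0
        have : 0 < η * d := by positivity
        nlinarith
      have h4 : (m * (η * (3 * d / 8)) / 2) ^ q = m ^ q * δ * (1 / 2) ^ q := by
        rw [hδ, ← Real.mul_rpow (by linarith) (by positivity),
          ← Real.mul_rpow (by positivity) (by norm_num)]
        congr 1; ring
      have h5 : (1 / 2 : ℝ) ^ q ≤ 1 / 2 := by
        have := Real.rpow_le_rpow_of_exponent_ge' (x := 1 / 2) (by norm_num) (by norm_num)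
          zero_le_one (by linarith : (1 : ℝ) ≤ q)
        rwa [Real.rpow_one] at this
      have : 0 ≤ m ^ q * δ := by positivity
      nlinarith
    have h6 : 0 ≤ ((1 - s) / 2) ^ q := Real.rpow_nonneg (by linarith) _
    linarith

/-- A modulus of convexity of power type `q` yields a two-point midpoint inequality. -/
lemma midpoint_rpow_le {η q : ℝ} (hη : η ∈ Set.Ioo (0 : ℝ) 1) (hq : 2 ≤ q)
    (hX : ∀ ε ∈ Set.Ioo (0 : ℝ) 1, ∀ x y : X, ‖x‖ = 1 → ‖y‖ = 1 → ε ≤ ‖x - y‖ →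
      ‖x + y‖ ≤ 2 * (1 - (η * ε) ^ q)) (u v : X) :
    ‖(2⁻¹ : ℝ) • (u + v)‖ ^ q + (η / 32) ^ q * ‖u - v‖ ^ q ≤ (‖u‖ ^ q + ‖v‖ ^ q) / 2 := by
  wlog h : ‖v‖ ≤ ‖u‖ generalizing u v
  · have := this v u (le_of_not_ge h)
    rwa [add_comm v u, norm_sub_rev, add_comm (‖v‖ ^ q)] at this
  have hq0 : q ≠ 0 := by linarith
  rcases (norm_nonneg u).eq_or_lt with hu | hu
  · have hu' : u = 0 := norm_eq_zero.1 hu.symm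
    have hv' : v = 0 := norm_le_zero_iff.1 (h.trans hu.symm.le)
    simp [hu', hv', Real.zero_rpow hq0]
  set R := ‖u‖ with hR
  have hsc : ∀ w : X, ‖w‖ ^ q = R ^ q * ‖R⁻¹ • w‖ ^ q := fun w => by
    rw [norm_smul, norm_inv, Real.norm_of_nonneg hu.le, ← Real.mul_rpow hu.le (by positivity),
      mul_inv_cancel_left₀ hu.ne']
  have key := midpoint_rpow_le_of_norm_eq_one hη hq hX (u := R⁻¹ • u) (v := R⁻¹ • v)
    (by rw [norm_smul, norm_inv, Real.norm_of_nonneg hu.le, ← hR, inv_mul_cancel₀ hu.ne'])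
    (by rw [norm_smul, norm_inv, Real.norm_of_nonneg hu.le, inv_mul_le_iff₀ hu]; simpa using h)
  have h1 := hsc ((2⁻¹ : ℝ) • (u + v))
  have h2 := hsc (u - v)
  rw [smul_comm, smul_add R⁻¹] at h1
  rw [smul_sub] at h2
  rw [h1, h2, hsc v]
  have h3 := mul_le_mul_of_nonneg_left key (Real.rpow_nonneg hu.le q)
  have h4 : R ^ q = R ^ q * ‖R⁻¹ • u‖ ^ q := hsc u
  linarith

end

namespace DH

section Averages
variable {X : Type*} [NormedAddCommGroup X] [NormedSpace ℝ X]

/-- `vAvg f j x` is the average of `f (x * c ^ i)` over `0 ≤ i < 2 ^ j`. -/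
noncomputable def vAvg (f : DH → X) : ℕ → DH → X
  | 0 => f
  | j + 1 => fun x => (2⁻¹ : ℝ) • (vAvg f j x + vAvg f j (x * gC ^ 2 ^ j))

/-- The difference of the averages of `f` over two adjacent vertical blocks of length `2 ^ j`. -/
noncomputable def vDiff (f : DH → X) (j : ℕ) (x : DH) : X :=
  vAvg f j x - vAvg f j (x * gC ^ 2 ^ j)

/-- The discrete derivative of `f` along right multiplication by `s`. -/
def rDeriv (s : DH) (f : DH → X) (x : DH) : X := f (x * s) - f x

lemma vAvg_succ (f : DH → X) (j : ℕ) (x : DH) :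
    vAvg f (j + 1) x = (2⁻¹ : ℝ) • (vAvg f j x + vAvg f j (x * gC ^ 2 ^ j)) := rfl

lemma rDeriv_vAvg (s : DH) (f : DH → X) (j : ℕ) :
    rDeriv s (vAvg f j) = vAvg (rDeriv s f) j := by
  induction j with
  | zero => rfl
  | succ j ih =>
    funext x
    rw [vAvg_succ, ← ih]
    simp only [rDeriv, vAvg_succ, ← smul_sub]
    rw [mul_assoc, mul_assoc, gC_pow_comm]
    congr 1; abel

lemma rDeriv_vDiff (s : DH) (f : DH → X) (j : ℕ) :
    rDeriv s (vDiff f j) = vDiff (rDeriv s f) j := by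
  funext x
  simp only [vDiff, ← rDeriv_vAvg]
  simp only [rDeriv, vDiff]
  rw [mul_assoc, mul_assoc, gC_pow_comm]
  abel

lemma vAvg_congr {f g : DH → X} {j : ℕ} {x : DH}
    (h : ∀ i < 2 ^ j, f (x * gC ^ i) = g (x * gC ^ i)) : vAvg f j x = vAvg g j x := by
  induction j generalizing x with
  | zero => simpa [vAvg] using h 0 (by simp)
  | succ j ih =>
    rw [vAvg_succ, vAvg_succ, ih fun i hi => h i (by rw [pow_succ]; omega), ih fun i hi => ?_]
    rw [mul_assoc, ← pow_add]
    exact h _ (by rw [pow_succ]; omega)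

lemma vDiff_congr {f g : DH → X} {j : ℕ} {x : DH}
    (h : ∀ i < 2 ^ (j + 1), f (x * gC ^ i) = g (x * gC ^ i)) : vDiff f j x = vDiff g j x := by
  have h' : ∀ i < 2 ^ j, f (x * gC ^ 2 ^ j * gC ^ i) = g (x * gC ^ 2 ^ j * gC ^ i) := fun i hi => by
    rw [mul_assoc, ← pow_add]
    exact h _ (by rw [pow_succ]; omega)
  rw [vDiff, vDiff, vAvg_congr fun i hi => h i (by rw [pow_succ]; omega), vAvg_congr h']

lemma vDiff_succ (f : DH → X) (j : ℕ) (x : DH) :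
    vDiff f j x = (2⁻¹ : ℝ) • vDiff f (j + 1) x
      - ((3 / 4 : ℝ) • rDeriv (gC ^ 2 ^ j) (vDiff f j) x
        + (1 / 4 : ℝ) • rDeriv (gC ^ 2 ^ j) (vDiff f j) (x * gC ^ 2 ^ j)) := by
  simp only [vDiff, rDeriv, vAvg_succ, pow_succ 2 j, mul_two, pow_add, mul_assoc]
  module

lemma vAvg_sub_vAvg_succ (f : DH → X) (j : ℕ) (x : DH) :
    vAvg f j x - vAvg f (j + 1) x = (2⁻¹ : ℝ) • vDiff f j x := by
  rw [vAvg_succ, vDiff]; module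

lemma vAvg_shift_sub_vAvg_succ (f : DH → X) (j : ℕ) (x : DH) :
    vAvg f j (x * gC ^ 2 ^ j) - vAvg f (j + 1) x = -((2⁻¹ : ℝ) • vDiff f j x) := by
  rw [vAvg_succ, vDiff]; module

end Averages

section LittlewoodPaley
variable {X : Type*} [NormedAddCommGroup X] [NormedSpace ℝ X] {q κ : ℝ}

open ENNReal in
lemma tsum_vAvg_add_sum_tsum_vDiff_le (hκ : 0 ≤ κ)
    (hX : ∀ u v : X, ‖(2⁻¹ : ℝ) • (u + v)‖ ^ q + κ * ‖u - v‖ ^ q ≤ (‖u‖ ^ q + ‖v‖ ^ q) / 2)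
    (g : DH → X) (J : ℕ) :
    ∑' x, ENNReal.ofReal (‖vAvg g J x‖ ^ q) +
      ∑ j ∈ Finset.range J, ∑' x, ENNReal.ofReal (κ * ‖vDiff g j x‖ ^ q) ≤
        ∑' x, ENNReal.ofReal (‖g x‖ ^ q) := by
  induction J with
  | zero => simp [vAvg]
  | succ J ih =>
    refine le_trans ?_ ih
    rw [Finset.sum_range_succ, add_comm (Finset.sum _ _), ← add_assoc]
    gcongr
    rw [← ENNReal.tsum_add]
    have hn : ∀ u : X, 0 ≤ ‖u‖ ^ q := fun u => by positivity
    calc ∑' x, (ENNReal.ofReal (‖vAvg g (J + 1) x‖ ^ q) + ENNReal.ofReal (κ * ‖vDiff g J x‖ ^ q))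
        ≤ ∑' x, (2⁻¹ * ENNReal.ofReal (‖vAvg g J x‖ ^ q) +
            2⁻¹ * ENNReal.ofReal (‖vAvg g J (x * gC ^ 2 ^ J)‖ ^ q)) := by
          refine ENNReal.tsum_le_tsum fun x => ?_
          rw [← ENNReal.ofReal_add (hn _) (mul_nonneg hκ (hn _)), ← mul_add,
            ← ENNReal.ofReal_add (hn _) (hn _),
            show (2⁻¹ : ℝ≥0∞) = ENNReal.ofReal 2⁻¹ by
              rw [ENNReal.ofReal_inv_of_pos two_pos]; simp,
            ← ENNReal.ofReal_mul (by norm_num)]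
          refine ENNReal.ofReal_le_ofReal ?_
          rw [inv_mul_eq_div]
          exact hX _ _
      _ = ∑' x, ENNReal.ofReal (‖vAvg g J x‖ ^ q) := by
          have hshift := (Equiv.mulRight (gC ^ 2 ^ J)).tsum_eq
            fun x => ENNReal.ofReal (‖vAvg g J x‖ ^ q)
          simp only [Equiv.coe_mulRight] at hshift
          rw [ENNReal.tsum_add, ENNReal.tsum_mul_left, ENNReal.tsum_mul_left, hshift, ← add_mul,
            ENNReal.inv_two_add_inv_two, one_mul]

/-- A local vertical Littlewood–Paley inequality. -/
lemma sum_vAvg_add_sum_sum_vDiff_le (hq : q ≠ 0) (hκ : 0 ≤ κ)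
    (hX : ∀ u v : X, ‖(2⁻¹ : ℝ) • (u + v)‖ ^ q + κ * ‖u - v‖ ^ q ≤ (‖u‖ ^ q + ‖v‖ ^ q) / 2)
    (g : DH → X) {J n : ℕ} (hJ : 2 ^ J ≤ n ^ 2) (m : ℕ) :
    ∑ x ∈ ballF m, ‖vAvg g J x‖ ^ q +
      ∑ j ∈ Finset.range J, κ * ∑ x ∈ ballF m, ‖vDiff g j x‖ ^ q ≤
        ∑ x ∈ ballF (m + 4 * n), ‖g x‖ ^ q := by
  classical
  set g' : DH → X := fun x => if x ∈ ballF (m + 4 * n) then g x else 0 with hg'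
  have hgg' : ∀ x ∈ ballF m, ∀ i < 2 ^ J, g (x * gC ^ i) = g' (x * gC ^ i) := by
    intro x hx i hi
    rw [hg']
    simp only
    rw [if_pos]
    rw [mem_ballF] at *
    exact mul_mem_Ball hx (gC_pow_mem_Ball (hi.le.trans hJ))
  have h := tsum_vAvg_add_sum_tsum_vDiff_le hκ hX g' J
  have hn : ∀ u : X, 0 ≤ ‖u‖ ^ q := fun u => by positivity
  have hr : ∑' x, ENNReal.ofReal (‖g' x‖ ^ q) =
      ENNReal.ofReal (∑ x ∈ ballF (m + 4 * n), ‖g x‖ ^ q) := by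
    rw [ENNReal.ofReal_sum_of_nonneg fun x _ => hn _, tsum_eq_sum (s := ballF (m + 4 * n))]
    · exact Finset.sum_congr rfl fun x hx => by simp only [hg', if_pos hx]
    · intro x hx
      simp only [hg', if_neg hx, norm_zero, Real.zero_rpow hq, ENNReal.ofReal_zero]
  rw [hr] at h
  have hl : ENNReal.ofReal (∑ x ∈ ballF m, ‖vAvg g J x‖ ^ q +
      ∑ j ∈ Finset.range J, κ * ∑ x ∈ ballF m, ‖vDiff g j x‖ ^ q) ≤
      ∑' x, ENNReal.ofReal (‖vAvg g' J x‖ ^ q) +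
      ∑ j ∈ Finset.range J, ∑' x, ENNReal.ofReal (κ * ‖vDiff g' j x‖ ^ q) := by
    have hs : ∀ φ : DH → X, 0 ≤ ∑ x ∈ ballF m, ‖φ x‖ ^ q := fun φ =>
      Finset.sum_nonneg fun x _ => hn _
    rw [ENNReal.ofReal_add (hs _) (Finset.sum_nonneg fun j _ => mul_nonneg hκ (hs _)),
      ENNReal.ofReal_sum_of_nonneg fun x _ => hn _,
      ENNReal.ofReal_sum_of_nonneg fun j _ => mul_nonneg hκ (hs _)]
    gcongr with j hj
    · refine le_trans (le_of_eq ?_) (ENNReal.sum_le_tsum (ballF m))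
      exact Finset.sum_congr rfl fun x hx => by rw [vAvg_congr (hgg' x hx)]
    · rw [Finset.mul_sum, ENNReal.ofReal_sum_of_nonneg fun x _ => mul_nonneg hκ (hn _)]
      refine le_trans (le_of_eq ?_) (ENNReal.sum_le_tsum (ballF m))
      refine Finset.sum_congr rfl fun x hx => ?_
      rw [vDiff_congr fun i hi => hgg' x hx i (hi.trans_le
        (Nat.pow_le_pow_right two_pos (Finset.mem_range.1 hj)))]
  exact (ENNReal.ofReal_le_ofReal_iff (Finset.sum_nonneg fun x _ => hn _)).1 (hl.trans h)

end LittlewoodPaley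

section Paths
variable {X : Type*} [NormedAddCommGroup X] {q : ℝ}

/-- The local horizontal energy of `φ`. -/
noncomputable def horEnergy (q : ℝ) (φ : DH → X) (m : ℕ) : ℝ :=
  ∑ x ∈ ballF m, (‖rDeriv gA φ x‖ ^ q + ‖rDeriv gB φ x‖ ^ q)

lemma horEnergy_nonneg (q : ℝ) (φ : DH → X) (m : ℕ) : 0 ≤ horEnergy q φ m :=
  Finset.sum_nonneg fun x _ => by positivity

lemma horEnergy_mono (q : ℝ) (φ : DH → X) {m n : ℕ} (h : m ≤ n) :
    horEnergy q φ m ≤ horEnergy q φ n :=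
  sum_ballF_mono h fun x => by positivity

lemma sum_step_le (φ : DH → X) {m L : ℕ} {s g : DH} (hs : s ∈ gens) (hg : g ∈ Ball L)
    (hgs : g * s ∈ Ball L) :
    ∑ x ∈ ballF m, ‖φ (x * (g * s)) - φ (x * g)‖ ^ q ≤ horEnergy q φ (m + L) := by
  have key : ∀ t ∈ ({gA, gB} : Set DH), ∀ y : DH,
      ‖rDeriv t φ y‖ ^ q ≤ ‖rDeriv gA φ y‖ ^ q + ‖rDeriv gB φ y‖ ^ q := by
    rintro t (rfl | rfl) y
    exacts [le_add_of_nonneg_right (by positivity), le_add_of_nonneg_left (by positivity)]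
  have hfwd : ∀ t ∈ ({gA, gB} : Set DH), ∀ p ∈ Ball L,
      ∑ x ∈ ballF m, ‖φ (x * (p * t)) - φ (x * p)‖ ^ q ≤ horEnergy q φ (m + L) := by
    intro t ht p hp
    refine le_trans (Finset.sum_le_sum fun x _ => ?_)
      (sum_ballF_mul_right_le hp fun x => by positivity)
    simpa only [rDeriv, mul_assoc] using key t ht (x * p)
  have hbwd : ∀ t ∈ ({gA, gB} : Set DH), g * t⁻¹ ∈ Ball L →
      ∑ x ∈ ballF m, ‖φ (x * (g * t⁻¹)) - φ (x * g)‖ ^ q ≤ horEnergy q φ (m + L) := by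
    intro t ht hp
    refine le_trans (le_of_eq (Finset.sum_congr rfl fun x _ => ?_)) (hfwd t ht _ hp)
    rw [inv_mul_cancel_right, norm_sub_rev]
  rcases hs with rfl | rfl | rfl | rfl
  · exact hfwd _ (by simp) _ hg
  · exact hfwd _ (by simp) _ hg
  · exact hbwd _ (by simp) hgs
  · exact hbwd _ (by simp) hgs

/-- Increments of `φ` along a word of length `L` are controlled by its horizontal energy. -/
lemma sum_rDeriv_le (hq : 1 ≤ q) (φ : DH → X) (m : ℕ) {L : ℕ} {g : DH} (hg : g ∈ Ball L) :
    ∑ x ∈ ballF m, ‖rDeriv g φ x‖ ^ q ≤ (L : ℝ) ^ q * horEnergy q φ (m + L) := by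
  obtain ⟨l, hl, hs, rfl⟩ := mem_Ball_iff.1 hg
  have hp : ∀ i, (l.take i).prod ∈ Ball L := fun i => mem_Ball_iff.2
    ⟨l.take i, by simp; omega, fun s h => hs s (List.mem_of_mem_take h), rfl⟩
  set a : ℕ → DH → ℝ := fun i x =>
    ‖φ (x * (l.take (i + 1)).prod) - φ (x * (l.take i).prod)‖ with ha
  have h1 : ∀ x, ‖rDeriv l.prod φ x‖ ^ q ≤
      (l.length : ℝ) ^ (q - 1) * ∑ i ∈ Finset.range l.length, a i x ^ q := by
    intro x
    have ht : rDeriv l.prod φ x = ∑ i ∈ Finset.range l.length,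
        (φ (x * (l.take (i + 1)).prod) - φ (x * (l.take i).prod)) := by
      rw [Finset.sum_range_sub fun i => φ (x * (l.take i).prod)]
      simp [rDeriv]
    have h2 := Real.rpow_sum_le_const_mul_sum_rpow (Finset.range l.length) (fun i => a i x) hq
    simp only [Finset.card_range, ha, abs_norm] at h2
    refine le_trans (Real.rpow_le_rpow (norm_nonneg _) ?_ (by linarith)) h2
    rw [ht]
    exact norm_sum_le _ _
  have h3 : ∀ i ∈ Finset.range l.length, ∑ x ∈ ballF m, a i x ^ q ≤ horEnergy q φ (m + L) := by
    intro i hi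
    have hi' := Finset.mem_range.1 hi
    have hstep : (l.take (i + 1)).prod = (l.take i).prod * l[i] := by
      rw [List.prod_take_succ]
    simp only [ha, hstep]
    exact sum_step_le φ (hs _ (List.getElem_mem hi')) (hp i) (hstep ▸ hp (i + 1))
  calc ∑ x ∈ ballF m, ‖rDeriv l.prod φ x‖ ^ q
      ≤ ∑ x ∈ ballF m, (l.length : ℝ) ^ (q - 1) * ∑ i ∈ Finset.range l.length, a i x ^ q :=
        Finset.sum_le_sum fun x _ => h1 x
    _ = (l.length : ℝ) ^ (q - 1) * ∑ i ∈ Finset.range l.length, ∑ x ∈ ballF m, a i x ^ q := by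
        rw [← Finset.mul_sum, Finset.sum_comm]
    _ ≤ (l.length : ℝ) ^ (q - 1) * (l.length * horEnergy q φ (m + L)) := by
        refine mul_le_mul_of_nonneg_left ?_ (by positivity)
        simpa using Finset.sum_le_card_nsmul _ _ _ h3
    _ = (l.length : ℝ) ^ q * horEnergy q φ (m + L) := by
        rw [← mul_assoc, ← Real.rpow_add_one' (by positivity) (by linarith), sub_add_cancel]
    _ ≤ (L : ℝ) ^ q * horEnergy q φ (m + L) := by
        refine mul_le_mul_of_nonneg_right ?_ (horEnergy_nonneg _ _ _)
        exact Real.rpow_le_rpow (by positivity) (by exact_mod_cast hl) (by linarith)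

end Paths

end DH

namespace DH

section Assembly
variable {X : Type*} [NormedAddCommGroup X] {q κ : ℝ}

lemma sum_rDeriv_gC_le (hq : 2 ≤ q) (φ : DH → X) {j n : ℕ} (hj : 2 ^ j ≤ n ^ 2) (m : ℕ) :
    ∑ x ∈ ballF m, ‖rDeriv (gC ^ 2 ^ j) φ x‖ ^ q ≤
      6 ^ q * ((2 : ℝ) ^ j) ^ (q / 2) * horEnergy q φ (m + 6 * n) := by
  set l := 2 ^ ((j + 1) / 2) with hl
  have hl2 : l ^ 2 = 2 ^ ((j + 1) / 2 * 2) := by rw [hl, ← pow_mul]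
  have hlow : 2 ^ j ≤ l ^ 2 := by
    rw [hl2]; exact Nat.pow_le_pow_right two_pos (by omega)
  have hupp : l ^ 2 ≤ 2 * 2 ^ j := by
    rw [hl2, ← pow_succ']; exact Nat.pow_le_pow_right two_pos (by omega)
  have hLn : 4 * l ≤ 6 * n := by nlinarith
  have hL : ((4 * l : ℕ) : ℝ) ^ q ≤ 6 ^ q * ((2 : ℝ) ^ j) ^ (q / 2) := by
    rw [← sq_rpow_half (by positivity : (0 : ℝ) ≤ (4 * l : ℕ)),
      ← sq_rpow_half (by norm_num : (0 : ℝ) ≤ 6), ← Real.mul_rpow (by positivity) (by positivity)]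
    refine Real.rpow_le_rpow (by positivity) ?_ (by linarith)
    have : ((l : ℝ)) ^ 2 ≤ 2 * 2 ^ j := by exact_mod_cast hupp
    push_cast
    nlinarith [pow_pos (two_pos : (0 : ℝ) < 2) j]
  exact (sum_rDeriv_le (by linarith) φ m (gC_pow_mem_Ball hlow)).trans
    (mul_le_mul hL (horEnergy_mono q φ (by omega)) (horEnergy_nonneg _ _ _) (by positivity))

/-- The solution of `M 0 = 0`, `M (j + 1) = (3 / 4) * M j + E j`. -/
noncomputable def geomConv (E : ℕ → ℝ) : ℕ → ℝ
  | 0 => 0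
  | j + 1 => 3 / 4 * geomConv E j + E j

lemma geomConv_nonneg {E : ℕ → ℝ} (hE : ∀ j, 0 ≤ E j) (j : ℕ) : 0 ≤ geomConv E j := by
  induction j with
  | zero => exact le_rfl
  | succ j ih => exact add_nonneg (by positivity) (hE j)

lemma sum_geomConv_add_le {E : ℕ → ℝ} (J : ℕ) :
    ∑ j ∈ Finset.range J, geomConv E (j + 1) + 3 * geomConv E J ≤
      4 * ∑ j ∈ Finset.range J, E j := by
  induction J with
  | zero => simp [geomConv]
  | succ J ih =>
    have h : geomConv E (J + 1) = 3 / 4 * geomConv E J + E J := rfl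
    rw [Finset.sum_range_succ, Finset.sum_range_succ, h]
    linarith

lemma sum_le_of_contraction {E s : ℕ → ℝ} (hE : ∀ j, 0 ≤ E j) {J : ℕ}
    (h : ∀ j < J, E j ≤ 3 / 4 * E (j + 1) + s j) :
    ∑ j ∈ Finset.range (J + 1), E j ≤ 4 * (E J + ∑ j ∈ Finset.range J, s j) := by
  have h1 : ∑ j ∈ Finset.range J, E j ≤
      3 / 4 * ∑ j ∈ Finset.range J, E (j + 1) + ∑ j ∈ Finset.range J, s j := by
    rw [Finset.mul_sum, ← Finset.sum_add_distrib]
    exact Finset.sum_le_sum fun j hj => h j (Finset.mem_range.1 hj)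
  have h2 := Finset.sum_range_succ' E J
  have h3 := Finset.sum_range_succ E J
  have := hE 0
  linarith

variable [NormedSpace ℝ X]

lemma horEnergy_littlewoodPaley (hq : q ≠ 0) (hκ : 0 ≤ κ)
    (hX : ∀ u v : X, ‖(2⁻¹ : ℝ) • (u + v)‖ ^ q + κ * ‖u - v‖ ^ q ≤ (‖u‖ ^ q + ‖v‖ ^ q) / 2)
    (f : DH → X) {J n : ℕ} (hJ : 2 ^ J ≤ n ^ 2) (m : ℕ) :
    horEnergy q (vAvg f J) m + κ * ∑ j ∈ Finset.range J, horEnergy q (vDiff f j) m ≤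
      horEnergy q f (m + 4 * n) := by
  have ha := sum_vAvg_add_sum_sum_vDiff_le hq hκ hX (rDeriv gA f) hJ m
  have hb := sum_vAvg_add_sum_sum_vDiff_le hq hκ hX (rDeriv gB f) hJ m
  simp only [horEnergy, Finset.sum_add_distrib, rDeriv_vAvg, rDeriv_vDiff, mul_add,
    Finset.mul_sum (s := Finset.range J)]
  linarith

/-- The normalized vertical oscillation of `f` at scale `2 ^ j` on a ball. -/
noncomputable def vOsc (q : ℝ) (f : DH → X) (m j : ℕ) : ℝ :=
  (((2 : ℝ) ^ j) ^ (q / 2))⁻¹ * ∑ x ∈ ballF m, ‖vDiff f j x‖ ^ q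

lemma vOsc_nonneg (q : ℝ) (f : DH → X) (m j : ℕ) : 0 ≤ vOsc q f m j :=
  mul_nonneg (by positivity) (Finset.sum_nonneg fun x _ => by positivity)

lemma sum_vDiff_eq (q : ℝ) (f : DH → X) (m j : ℕ) :
    ∑ x ∈ ballF m, ‖vDiff f j x‖ ^ q = ((2 : ℝ) ^ j) ^ (q / 2) * vOsc q f m j := by
  rw [vOsc, mul_inv_cancel_left₀ (by positivity)]

lemma two_pow_succ_rpow (j : ℕ) (q : ℝ) :
    ((2 : ℝ) ^ (j + 1)) ^ (q / 2) = 2 ^ (q / 2) * ((2 : ℝ) ^ j) ^ (q / 2) := by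
  rw [pow_succ', Real.mul_rpow (by norm_num) (by positivity)]

lemma rpow_le_two_rpow_half {a q : ℝ} (hq : 0 ≤ q) (ha : 0 ≤ a) (h : a ^ 2 ≤ 2) :
    a ^ q ≤ 2 ^ (q / 2) := by
  rw [← sq_rpow_half ha]
  exact Real.rpow_le_rpow (by positivity) h (by linarith)

lemma vOsc_le_vOsc_succ (hq : 2 ≤ q) (f : DH → X) {j n : ℕ} (hj : 2 ^ j ≤ n ^ 2) :
    vOsc q f (5 * n) j ≤
      3 / 4 * vOsc q f (5 * n) (j + 1) + 24 ^ q * horEnergy q (vDiff f j) (17 * n) := by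
  have hpt : ∀ x, ‖vDiff f j x‖ ^ q ≤ 3 / 4 * ((2 / 3) ^ q * ‖vDiff f (j + 1) x‖ ^ q) +
      1 / 4 * (4 ^ q * (3 / 4 * ‖rDeriv (gC ^ 2 ^ j) (vDiff f j) x‖ ^ q +
        1 / 4 * ‖rDeriv (gC ^ 2 ^ j) (vDiff f j) (x * gC ^ 2 ^ j)‖ ^ q)) := by
    intro x
    set a := ‖vDiff f (j + 1) x‖
    set b := ‖rDeriv (gC ^ 2 ^ j) (vDiff f j) x‖
    set c := ‖rDeriv (gC ^ 2 ^ j) (vDiff f j) (x * gC ^ 2 ^ j)‖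
    have ha : 0 ≤ a := norm_nonneg _
    have hb : 0 ≤ b := norm_nonneg _
    have hc : 0 ≤ c := norm_nonneg _
    have h0 : ‖vDiff f j x‖ ≤ 3 / 4 * (2 / 3 * a) + 1 / 4 * (4 * (3 / 4 * b + 1 / 4 * c)) := by
      rw [vDiff_succ]
      refine (norm_sub_le _ _).trans ?_
      refine (add_le_add_right (norm_add_le _ _) _).trans ?_
      simp only [norm_smul]
      norm_num
      linarith
    refine (Real.rpow_le_rpow (norm_nonneg _) h0 (by linarith)).trans ?_
    refine (convex_comb_rpow_le hq (by norm_num) (by norm_num) (by norm_num) (by positivity)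
      (by positivity)).trans ?_
    rw [Real.mul_rpow (by norm_num) ha, Real.mul_rpow (by norm_num) (by positivity)]
    gcongr
    exact convex_comb_rpow_le hq (by norm_num) (by norm_num) (by norm_num) hb hc
  have hsum := Finset.sum_le_sum fun x (_ : x ∈ ballF (5 * n)) => hpt x
  simp only [Finset.sum_add_distrib, ← Finset.mul_sum] at hsum
  set H := horEnergy q (vDiff f j) (17 * n)
  set w := ((2 : ℝ) ^ j) ^ (q / 2) with hw
  have hw0 : 0 < w := by positivity
  have hY : ∑ x ∈ ballF (5 * n), ‖rDeriv (gC ^ 2 ^ j) (vDiff f j) x‖ ^ q ≤ 6 ^ q * w * H :=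
    (sum_rDeriv_gC_le hq _ hj _).trans (mul_le_mul_of_nonneg_left
      (horEnergy_mono q _ (by omega)) (by positivity))
  have hZ : ∑ x ∈ ballF (5 * n), ‖rDeriv (gC ^ 2 ^ j) (vDiff f j) (x * gC ^ 2 ^ j)‖ ^ q ≤
      6 ^ q * w * H :=
    (sum_ballF_mul_right_le (gC_pow_mem_Ball hj) fun x => by positivity).trans
      ((sum_rDeriv_gC_le hq _ hj _).trans (mul_le_mul_of_nonneg_left
        (horEnergy_mono q _ (by omega)) (by positivity)))
  rw [sum_vDiff_eq, sum_vDiff_eq, two_pow_succ_rpow, ← hw] at hsum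
  set E := vOsc q f (5 * n) (j + 1)
  have hE : 0 ≤ E := vOsc_nonneg _ _ _ _
  have hH0 : 0 ≤ H := horEnergy_nonneg _ _ _
  have hcoef : (2 / 3 : ℝ) ^ q * 2 ^ (q / 2) ≤ 1 := by
    have h1 : (3 / 2 : ℝ)⁻¹ = 2 / 3 := by norm_num
    rw [← h1, Real.inv_rpow (by norm_num), ← sq_rpow_half (by norm_num : (0 : ℝ) ≤ 3 / 2),
      inv_mul_le_iff₀ (by positivity), mul_one]
    exact Real.rpow_le_rpow (by norm_num) (by norm_num) (by linarith)
  have h24 : (24 : ℝ) ^ q = 4 ^ q * 6 ^ q := by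
    rw [← Real.mul_rpow (by norm_num) (by norm_num)]; norm_num
  have hT : 1 / 4 * ((4 : ℝ) ^ q *
      (3 / 4 * ∑ x ∈ ballF (5 * n), ‖rDeriv (gC ^ 2 ^ j) (vDiff f j) x‖ ^ q +
        1 / 4 * ∑ x ∈ ballF (5 * n), ‖rDeriv (gC ^ 2 ^ j) (vDiff f j) (x * gC ^ 2 ^ j)‖ ^ q)) ≤
      w * (24 ^ q * H) := by
    have h4 : (4 : ℝ) ^ q * (3 / 4 *
        ∑ x ∈ ballF (5 * n), ‖rDeriv (gC ^ 2 ^ j) (vDiff f j) x‖ ^ q + 1 / 4 *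
        ∑ x ∈ ballF (5 * n), ‖rDeriv (gC ^ 2 ^ j) (vDiff f j) (x * gC ^ 2 ^ j)‖ ^ q) ≤
        4 ^ q * (6 ^ q * w * H) :=
      mul_le_mul_of_nonneg_left (by linarith) (by positivity)
    have h5 : 0 ≤ (4 : ℝ) ^ q * (6 ^ q * w * H) := by positivity
    rw [h24]
    linarith
  have hR : 3 / 4 * ((2 / 3 : ℝ) ^ q * (2 ^ (q / 2) * w * E)) ≤ w * (3 / 4 * E) := by
    have := mul_le_mul_of_nonneg_right hcoef (by positivity : 0 ≤ w * E)
    linarith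
  refine le_of_mul_le_mul_left ?_ hw0
  rw [mul_add]
  exact hsum.trans (add_le_add hR hT)

lemma vOsc_le_horEnergy (hq : 2 ≤ q) (f : DH → X) {j n : ℕ} (hj : 2 ^ j ≤ n ^ 2) :
    vOsc q f (5 * n) j ≤ 6 ^ q * horEnergy q (vAvg f j) (17 * n) := by
  have hw : 0 < ((2 : ℝ) ^ j) ^ (q / 2) := by positivity
  rw [vOsc, inv_mul_le_iff₀ hw, ← mul_assoc, mul_comm _ ((6 : ℝ) ^ q)]
  refine le_trans (le_of_eq ?_) ((sum_rDeriv_gC_le hq (vAvg f j) hj (5 * n)).trans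
    (mul_le_mul_of_nonneg_left (horEnergy_mono q _ (by omega)) (by positivity)))
  exact Finset.sum_congr rfl fun x _ => by rw [rDeriv, vDiff, norm_sub_rev]

lemma sum_vOsc_le (hq : 2 ≤ q) (hκ : 0 < κ)
    (hX : ∀ u v : X, ‖(2⁻¹ : ℝ) • (u + v)‖ ^ q + κ * ‖u - v‖ ^ q ≤ (‖u‖ ^ q + ‖v‖ ^ q) / 2)
    (f : DH → X) {J n : ℕ} (hJ : 2 ^ J ≤ n ^ 2) :
    ∑ j ∈ Finset.range (J + 1), vOsc q f (5 * n) j ≤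
      4 * ((6 ^ q + 24 ^ q * κ⁻¹) * horEnergy q f (21 * n)) := by
  have hLP := horEnergy_littlewoodPaley (by linarith) hκ.le hX f hJ (17 * n)
  rw [show 17 * n + 4 * n = 21 * n by ring] at hLP
  set G := horEnergy q f (21 * n)
  set S := ∑ j ∈ Finset.range J, horEnergy q (vDiff f j) (17 * n) with hS
  have hS0 : 0 ≤ S := Finset.sum_nonneg fun j _ => horEnergy_nonneg _ _ _
  have hA0 := horEnergy_nonneg q (vAvg f J) (17 * n)
  have h1 := sum_le_of_contraction (vOsc_nonneg q f (5 * n)) (J := J)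
    fun j hj => vOsc_le_vOsc_succ hq f ((Nat.pow_le_pow_right two_pos hj.le).trans hJ)
  rw [← Finset.mul_sum, ← hS] at h1
  have h2 := vOsc_le_horEnergy hq f hJ
  have h3 : S ≤ κ⁻¹ * G := by
    rw [le_inv_mul_iff₀ hκ]; linarith
  have h4 : horEnergy q (vAvg f J) (17 * n) ≤ G := by
    have := mul_nonneg hκ.le hS0
    linarith
  have h5 := mul_le_mul_of_nonneg_left h3 (by positivity : (0 : ℝ) ≤ 24 ^ q)
  have h6 := mul_le_mul_of_nonneg_left h4 (by positivity : (0 : ℝ) ≤ 6 ^ q)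
  linarith

lemma sum_sub_vAvg_le (hq : 2 ≤ q) (f : DH → X) {k n : ℕ} (hk : k ≤ n ^ 2) (j : ℕ) :
    ∑ x ∈ ballF n, ‖f (x * gC ^ k) - vAvg f j (x * gC ^ (2 ^ j * (k / 2 ^ j)))‖ ^ q ≤
      ((2 : ℝ) ^ j) ^ (q / 2) * (2 ^ q * geomConv (vOsc q f (5 * n)) j) := by
  induction j with
  | zero => simp [vAvg, geomConv, Real.zero_rpow (by linarith : q ≠ 0)]
  | succ j ih =>
    set k' := 2 ^ (j + 1) * (k / 2 ^ (j + 1)) with hk'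
    have hk'n : k' ≤ n ^ 2 := (Nat.mul_div_le _ _).trans hk
    have hstep : ∀ x, ‖vAvg f j (x * gC ^ (2 ^ j * (k / 2 ^ j))) -
        vAvg f (j + 1) (x * gC ^ k')‖ = 2⁻¹ * ‖vDiff f j (x * gC ^ k')‖ := by
      intro x
      have hdiv : k / 2 ^ (j + 1) = k / 2 ^ j / 2 := by rw [pow_succ, Nat.div_div_eq_div_mul]
      rcases Nat.mod_two_eq_zero_or_one (k / 2 ^ j) with h | h
      · have e : 2 ^ j * (k / 2 ^ j) = k' := by
          rw [hk', hdiv, pow_succ, mul_assoc]; congr 1; omega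
        rw [e, vAvg_sub_vAvg_succ, norm_smul]
        norm_num
      · have e : 2 ^ j * (k / 2 ^ j) = k' + 2 ^ j := by
          rw [hk', hdiv, pow_succ, mul_assoc, ← Nat.mul_succ]; congr 1; omega
        rw [e, pow_add, ← mul_assoc, vAvg_shift_sub_vAvg_succ, norm_neg, norm_smul]
        norm_num
    have hpt : ∀ x, ‖f (x * gC ^ k) - vAvg f (j + 1) (x * gC ^ k')‖ ^ q ≤
        3 / 4 * ((4 / 3) ^ q *
          ‖f (x * gC ^ k) - vAvg f j (x * gC ^ (2 ^ j * (k / 2 ^ j)))‖ ^ q) +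
        1 / 4 * (2 ^ q * ‖vDiff f j (x * gC ^ k')‖ ^ q) := by
      intro x
      have h0 := norm_sub_le_norm_sub_add_norm_sub (f (x * gC ^ k))
        (vAvg f j (x * gC ^ (2 ^ j * (k / 2 ^ j)))) (vAvg f (j + 1) (x * gC ^ k'))
      rw [hstep] at h0
      set a := ‖f (x * gC ^ k) - vAvg f j (x * gC ^ (2 ^ j * (k / 2 ^ j)))‖
      set b := ‖vDiff f j (x * gC ^ k')‖
      have ha : 0 ≤ a := norm_nonneg _
      have hb : 0 ≤ b := norm_nonneg _
      have h1 : a + 2⁻¹ * b = 3 / 4 * (4 / 3 * a) + 1 / 4 * (2 * b) := by ring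
      rw [h1] at h0
      refine (Real.rpow_le_rpow (norm_nonneg _) h0 (by linarith)).trans ?_
      refine (convex_comb_rpow_le hq (by norm_num) (by norm_num) (by norm_num) (by positivity)
        (by positivity)).trans ?_
      rw [Real.mul_rpow (by norm_num) ha, Real.mul_rpow (by norm_num) hb]
    have hsum := Finset.sum_le_sum fun x (_ : x ∈ ballF n) => hpt x
    simp only [Finset.sum_add_distrib, ← Finset.mul_sum] at hsum
    have hD : ∑ x ∈ ballF n, ‖vDiff f j (x * gC ^ k')‖ ^ q ≤
        ((2 : ℝ) ^ j) ^ (q / 2) * vOsc q f (5 * n) j := by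
      rw [← sum_vDiff_eq]
      refine (sum_ballF_mul_right_le (gC_pow_mem_Ball hk'n) (φ := fun x => ‖vDiff f j x‖ ^ q)
        fun x => by positivity).trans ?_
      exact sum_ballF_mono (by omega) fun x => by positivity
    have hM := geomConv_nonneg (vOsc_nonneg q f (5 * n)) j
    rw [two_pow_succ_rpow]
    simp only [geomConv]
    set w := ((2 : ℝ) ^ j) ^ (q / 2)
    set M := geomConv (vOsc q f (5 * n)) j
    set E := vOsc q f (5 * n) j
    have hE0 : 0 ≤ E := vOsc_nonneg _ _ _ _
    have hw0 : 0 ≤ w := by positivity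
    have hcoef : (4 / 3 : ℝ) ^ q ≤ 2 ^ (q / 2) :=
      rpow_le_two_rpow_half (by linarith) (by norm_num) (by norm_num)
    have hone : (1 : ℝ) ≤ 2 ^ (q / 2) := Real.one_le_rpow (by norm_num) (by linarith)
    have h1 : (4 / 3 : ℝ) ^ q *
        ∑ x ∈ ballF n, ‖f (x * gC ^ k) - vAvg f j (x * gC ^ (2 ^ j * (k / 2 ^ j)))‖ ^ q ≤
        2 ^ (q / 2) * (w * (2 ^ q * M)) :=
      mul_le_mul hcoef ih (Finset.sum_nonneg fun x _ => by positivity) (by positivity)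
    have h2 : (2 : ℝ) ^ q * ∑ x ∈ ballF n, ‖vDiff f j (x * gC ^ k')‖ ^ q ≤ 2 ^ q * (w * E) :=
      mul_le_mul_of_nonneg_left hD (by positivity)
    have h3 : 0 ≤ (2 : ℝ) ^ q * (w * E) := by positivity
    have h4 : (2 : ℝ) ^ q * (w * E) ≤ 2 ^ (q / 2) * (2 ^ q * (w * E)) :=
      le_mul_of_one_le_left h3 hone
    linarith

lemma sum_vertical_le (hq : 2 ≤ q) (f : DH → X) {k n j : ℕ} (hk : k ≤ n ^ 2)
    (hkj : k < 2 ^ (j + 1)) :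
    ∑ x ∈ ballF n, ‖f (x * gC ^ k) - f x‖ ^ q ≤
      ((2 : ℝ) ^ j) ^ (q / 2) * (8 ^ q * geomConv (vOsc q f (5 * n)) (j + 1)) := by
  have h1 := sum_sub_vAvg_le hq f hk (j + 1)
  have h2 := sum_sub_vAvg_le hq f (Nat.zero_le (n ^ 2)) (j + 1)
  simp only [Nat.div_eq_of_lt hkj, Nat.zero_div, mul_zero, pow_zero, mul_one] at h1 h2
  have hpt : ∀ x, ‖f (x * gC ^ k) - f x‖ ^ q ≤
      1 / 2 * (2 ^ q * ‖f (x * gC ^ k) - vAvg f (j + 1) x‖ ^ q) +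
      1 / 2 * (2 ^ q * ‖f x - vAvg f (j + 1) x‖ ^ q) := by
    intro x
    have h0 := norm_sub_le_norm_sub_add_norm_sub (f (x * gC ^ k)) (vAvg f (j + 1) x) (f x)
    rw [norm_sub_rev (vAvg f (j + 1) x)] at h0
    rw [← Real.mul_rpow (by norm_num) (norm_nonneg _),
      ← Real.mul_rpow (by norm_num) (norm_nonneg _)]
    refine (Real.rpow_le_rpow (norm_nonneg _) (h0.trans (le_of_eq ?_)) (by linarith)).trans
      (convex_comb_rpow_le hq (by norm_num) (by norm_num) (by norm_num) (by positivity)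
      (by positivity))
    ring
  have hsum := Finset.sum_le_sum fun x (_ : x ∈ ballF n) => hpt x
  simp only [Finset.sum_add_distrib, ← Finset.mul_sum] at hsum
  rw [two_pow_succ_rpow] at h1 h2
  have hM := geomConv_nonneg (vOsc_nonneg q f (5 * n)) (j + 1)
  set w := ((2 : ℝ) ^ j) ^ (q / 2)
  set M := geomConv (vOsc q f (5 * n)) (j + 1)
  have h2q : (2 : ℝ) ^ (q / 2) ≤ 2 ^ q :=
    Real.rpow_le_rpow_of_exponent_le (by norm_num) (by linarith)
  have h8 : (8 : ℝ) ^ q = 2 ^ q * (2 ^ q * 2 ^ q) := by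
    rw [← Real.mul_rpow (by norm_num) (by norm_num), ← Real.mul_rpow (by norm_num) (by norm_num)]
    norm_num
  have h3 := mul_le_mul_of_nonneg_left h1 (by positivity : (0 : ℝ) ≤ 2 ^ q)
  have h4 := mul_le_mul_of_nonneg_left h2 (by positivity : (0 : ℝ) ≤ 2 ^ q)
  have h5 := mul_le_mul_of_nonneg_right h2q (by positivity : 0 ≤ 2 ^ q * (w * (2 ^ q * M)))
  rw [h8]
  linarith

lemma card_filter_log_le (s : Finset ℕ) (hs : 0 ∉ s) (j : ℕ) :
    (s.filter fun k => Nat.log 2 k = j).card ≤ 2 ^ j := by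
  have hsub : (s.filter fun k => Nat.log 2 k = j) ⊆ Finset.Ico (2 ^ j) (2 ^ (j + 1)) := by
    intro k hk
    obtain ⟨hks, rfl⟩ := Finset.mem_filter.1 hk
    have hk0 : k ≠ 0 := fun h => hs (h ▸ hks)
    exact Finset.mem_Ico.2 ⟨Nat.pow_log_le_self 2 hk0, Nat.lt_pow_succ_log_self one_lt_two k⟩
  refine (Finset.card_le_card hsub).trans ?_
  rw [Nat.card_Ico, pow_succ]
  omega

lemma sum_sum_vertical_le (hq : 2 ≤ q) (f : DH → X) (n : ℕ) :
    ∑ k ∈ Finset.Icc 1 (n ^ 2), ∑ x ∈ ballF n,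
      ‖f (x * gC ^ k) - f x‖ ^ q / (k : ℝ) ^ (1 + q / 2) ≤
      8 ^ q * (4 * ∑ j ∈ Finset.range (Nat.log 2 (n ^ 2) + 1), vOsc q f (5 * n) j) := by
  set J := Nat.log 2 (n ^ 2)
  set M := geomConv (vOsc q f (5 * n))
  have hM0 : ∀ j, 0 ≤ M j := geomConv_nonneg (vOsc_nonneg q f (5 * n))
  have hterm : ∀ k ∈ Finset.Icc 1 (n ^ 2), ∑ x ∈ ballF n,
      ‖f (x * gC ^ k) - f x‖ ^ q / (k : ℝ) ^ (1 + q / 2) ≤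
        ((2 : ℝ) ^ Nat.log 2 k)⁻¹ * (8 ^ q * M (Nat.log 2 k + 1)) := by
    intro k hk
    obtain ⟨hk1, hkn⟩ := Finset.mem_Icc.1 hk
    have hk0 : (0 : ℝ) < k := by exact_mod_cast hk1
    set j := Nat.log 2 k
    have hjk : (2 : ℝ) ^ j ≤ k := by exact_mod_cast Nat.pow_log_le_self 2 (by omega)
    have h1 := sum_vertical_le hq f hkn (Nat.lt_pow_succ_log_self one_lt_two k)
    rw [← Finset.sum_div, div_le_iff₀ (by positivity), Real.rpow_add hk0, Real.rpow_one]
    refine h1.trans ?_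
    have h2 : (2 : ℝ) ^ j * ((2 : ℝ) ^ j) ^ (q / 2) ≤ k * (k : ℝ) ^ (q / 2) :=
      mul_le_mul hjk (Real.rpow_le_rpow (by positivity) hjk (by linarith)) (by positivity) hk0.le
    have h3 := mul_le_mul_of_nonneg_left h2
      (mul_nonneg (by positivity : 0 ≤ ((2 : ℝ) ^ j)⁻¹)
        (mul_nonneg (by positivity : (0 : ℝ) ≤ 8 ^ q) (hM0 (j + 1))))
    refine le_trans (le_of_eq ?_) h3
    field_simp
    exact mul_comm _ _
  have hmaps : ∀ k ∈ Finset.Icc 1 (n ^ 2), Nat.log 2 k ∈ Finset.range (J + 1) := fun k hk =>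
    Finset.mem_range.2 (Nat.lt_succ_of_le (Nat.log_mono_right (Finset.mem_Icc.1 hk).2))
  calc _ ≤ ∑ k ∈ Finset.Icc 1 (n ^ 2),
        ((2 : ℝ) ^ Nat.log 2 k)⁻¹ * (8 ^ q * M (Nat.log 2 k + 1)) := Finset.sum_le_sum hterm
    _ = ∑ j ∈ Finset.range (J + 1), ∑ k ∈ Finset.Icc 1 (n ^ 2) with Nat.log 2 k = j,
        ((2 : ℝ) ^ Nat.log 2 k)⁻¹ * (8 ^ q * M (Nat.log 2 k + 1)) :=
      (Finset.sum_fiberwise_of_maps_to hmaps _).symm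
    _ ≤ ∑ j ∈ Finset.range (J + 1), 8 ^ q * M (j + 1) := by
      refine Finset.sum_le_sum fun j _ => ?_
      have hc := card_filter_log_le (Finset.Icc 1 (n ^ 2)) (by simp) j
      rw [Finset.sum_congr rfl fun k hk => by rw [(Finset.mem_filter.1 hk).2], Finset.sum_const,
        nsmul_eq_mul, ← mul_assoc]
      refine mul_le_of_le_one_left (mul_nonneg (by positivity) (hM0 _)) ?_
      rw [← div_eq_mul_inv, div_le_one (by positivity)]
      exact_mod_cast hc
    _ = 8 ^ q * ∑ j ∈ Finset.range (J + 1), M (j + 1) := by rw [Finset.mul_sum]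
    _ ≤ _ := by
      refine mul_le_mul_of_nonneg_left ?_ (by positivity)
      have := sum_geomConv_add_le (E := vOsc q f (5 * n)) (J + 1)
      have := hM0 (J + 1)
      linarith

end Assembly

end DH

open DH in
/-- Theorem 1.1 (Vertical versus horizontal Poincaré inequality). -/
theorem vertical_vs_horizontal_poincare (η : ℝ) (hη : η ∈ Set.Ioo (0 : ℝ) 1)
    (q : ℝ) (hq : 2 ≤ q) :
    ∃ K : ℝ, 0 < K ∧
      ∀ (X : Type) [NormedAddCommGroup X] [NormedSpace ℝ X] [CompleteSpace X],
        (∀ ε ∈ Set.Ioo (0 : ℝ) 1, ∀ x y : X, ‖x‖ = 1 → ‖y‖ = 1 → ε ≤ ‖x - y‖ →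
          ‖x + y‖ ≤ 2 * (1 - (η * ε) ^ q)) →
        ∀ (n : ℕ) (f : DH → X),
          ∑ k ∈ Finset.Icc 1 (n ^ 2),
              ∑' x : Ball n, ‖f (↑x * gC ^ k) - f ↑x‖ ^ q / (k : ℝ) ^ (1 + q / 2) ≤
            K * ∑' x : Ball (21 * n),
              (‖f (↑x * gA) - f ↑x‖ ^ q + ‖f (↑x * gB) - f ↑x‖ ^ q) := by
  have hκ : 0 < (η / 32) ^ q := Real.rpow_pos_of_pos (by linarith [hη.1]) q
  refine ⟨8 ^ q * (4 * (4 * (6 ^ q + 24 ^ q * ((η / 32) ^ q)⁻¹))), by positivity, ?_⟩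
  intro X _ _ _ hX n f
  rw [tsum_Ball (21 * n) fun x => ‖f (x * gA) - f x‖ ^ q + ‖f (x * gB) - f x‖ ^ q]
  simp only [fun k : ℕ => tsum_Ball n fun x => ‖f (x * gC ^ k) - f x‖ ^ q / (k : ℝ) ^ (1 + q / 2)]
  rcases Nat.eq_zero_or_pos n with rfl | hn
  · simp only [ne_eq, OfNat.ofNat_ne_zero, not_false_eq_true, zero_pow, zero_lt_one,
      Finset.Icc_eq_empty_of_lt, Finset.sum_empty]
    exact mul_nonneg (by positivity) (Finset.sum_nonneg fun x _ => by positivity)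
  have hJ : 2 ^ Nat.log 2 (n ^ 2) ≤ n ^ 2 := Nat.pow_log_le_self 2 (by positivity)
  have hE := sum_vOsc_le hq hκ (midpoint_rpow_le hη hq hX) f hJ
  refine (sum_sum_vertical_le hq f n).trans ?_
  have h8 : (0 : ℝ) ≤ 8 ^ q * 4 := by positivity
  have h := mul_le_mul_of_nonneg_left hE h8
  simp only [horEnergy, rDeriv] at h
  linarith
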